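/- arXiv:1308.2948 — 2 statements merged into one kernel-verified Lean document; each statement's English description precedes it below -/
import Mathlib

section
/- Let b > a > 0 and p ≥ 1. If f is twice differentiable on [0,b], |f''| is integrable on [0,b], and |f''|^p is convex on [0,b], then |(f(a)+f(b))/2 − (1/(b−a))·∫_a^b f(x) dx| ≤ ((b−a)²/2^{2−1/p})·[ ((p+1)|f''(a)|^p + 2|f''(b)|^p)/((p+1)(p+2)(p+3)) ]^{1/p}. -/
open MeasureTheory Real Set

/-!
Two integrations by parts express the trapezoid error as `(2 (b - a))⁻¹ ∫ (x - a) (b - x) f''`.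
Hölder's inequality is applied with only the factor `x - a` as weight, keeping `(b - x) |f''|` as
the integrand to be raised to the power `p`; this choice produces the asymmetry between `a` and `b`
in the bound. Bounding the convex function `|f''| ^ p` by its secant then leaves two Beta integrals.
The same convexity makes `|f''| ^ p`, hence `f''`, integrable.
-/

section BetaIntegral

variable {a b s : ℝ}

theorem integral_sub_pow_succ_mul_sub_rpow (n : ℕ) (hab : a ≤ b) (hs : -1 < s) :
    ∫ x in a..b, (x - a) ^ (n + 1) * (b - x) ^ s =
      (n + 1) / (s + 1) * ∫ x in a..b, (x - a) ^ n * (b - x) ^ (s + 1) := by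
  have hs' : s + 1 ≠ 0 := by linarith
  have hu (x : ℝ) : HasDerivAt (fun x => (x - a) ^ (n + 1)) ((n + 1) * (x - a) ^ n) x := by
    simpa using ((hasDerivAt_id x).sub_const a).fun_pow (n + 1)
  have hv (x : ℝ) (hx : x ∈ Ioo a b) :
      HasDerivAt (fun x => -(b - x) ^ (s + 1) / (s + 1)) ((b - x) ^ s) x := by
    refine ((((hasDerivAt_id x).const_sub b).rpow_const
      (.inl (sub_pos.2 hx.2).ne')).neg.div_const (s + 1)).congr_deriv ?_
    simp only [id, add_sub_cancel_right]
    field_simp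
  have hv_cont : Continuous fun x : ℝ => -(b - x) ^ (s + 1) / (s + 1) :=
    ((continuous_const.sub continuous_id).rpow_const fun _ => .inr (by linarith)).neg.div_const _
  have hv_int : IntervalIntegrable (fun x => (b - x) ^ s) volume a b := by
    simpa using (intervalIntegral.intervalIntegrable_rpow' hs).comp_sub_left b
      (a := b - a) (b := 0)
  rw [intervalIntegral.integral_mul_deriv_eq_deriv_mul_of_hasDerivAt (by fun_prop)
      hv_cont.continuousOn (fun x _ => hu x)
      (by simpa only [hab, min_eq_left, max_eq_right] using hv)
      (Continuous.intervalIntegrable (by fun_prop) _ _) hv_int,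
    ← intervalIntegral.integral_const_mul]
  simp only [sub_self, zero_rpow hs', neg_zero, zero_div, mul_zero,
    zero_pow n.succ_ne_zero, zero_mul, zero_sub, ← intervalIntegral.integral_neg]
  refine intervalIntegral.integral_congr fun x _ => ?_
  ring

theorem integral_sub_pow_mul_sub_rpow (n : ℕ) (hab : a ≤ b) (hs : -1 < s) :
    ∫ x in a..b, (x - a) ^ n * (b - x) ^ s =
      n.factorial * (b - a) ^ (s + n + 1) / ∏ j ∈ Finset.range (n + 1), (s + 1 + j) := by
  induction n generalizing s with
  | zero =>
    have h := intervalIntegral.integral_comp_sub_left (a := a) (b := b) (fun y => y ^ s) b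
    simp [h, integral_rpow (Or.inl hs), zero_rpow (by linarith : s + 1 ≠ 0)]
  | succ n ih =>
    have hs' : s + 1 ≠ 0 := by linarith
    rw [integral_sub_pow_succ_mul_sub_rpow n hab hs, ih (by linarith),
      Finset.prod_range_succ' _ (n + 1), Nat.factorial_succ]
    push_cast
    simp only [add_zero, add_assoc, add_comm (1 : ℝ)]
    field_simp

end BetaIntegral

section WeightedHolder

variable {α : Type*} [MeasurableSpace α] {μ : Measure α}

theorem memLp_of_integrable_norm_rpow {E : Type*} [NormedAddCommGroup E] {g : α → E} {p : ℝ}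
    (hp : 0 < p) (hg : AEStronglyMeasurable g μ) (hg_int : Integrable (fun x => ‖g x‖ ^ p) μ) :
    MemLp g (ENNReal.ofReal p) μ := by
  rwa [← integrable_norm_rpow_iff hg (ENNReal.ofReal_pos.2 hp).ne' ENNReal.ofReal_ne_top,
    ENNReal.toReal_ofReal hp.le]

theorem integral_mul_le_weight_mul_Lp_of_nonneg {w h : α → ℝ} {p : ℝ} (hp : 1 ≤ p)
    (hw : 0 ≤ᵐ[μ] w) (hh : 0 ≤ᵐ[μ] h) (hw_int : Integrable w μ) (hh_meas : AEStronglyMeasurable h μ)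
    (hwh_int : Integrable (fun x => w x * h x ^ p) μ) :
    ∫ x, w x * h x ∂μ ≤ (∫ x, w x ∂μ) ^ (1 - 1 / p) * (∫ x, w x * h x ^ p ∂μ) ^ (1 / p) := by
  obtain rfl | hp1 := hp.eq_or_lt
  · simp
  set q := p.conjExponent
  have hpq : p.HolderConjugate q := .conjExponent hp1
  have hq : 1 - 1 / p = 1 / q := by simpa only [one_div] using hpq.one_sub_inv
  have hu : 0 ≤ᵐ[μ] fun x => w x ^ (1 / q) := hw.mono fun _ hx => rpow_nonneg hx _
  have hv : 0 ≤ᵐ[μ] fun x => w x ^ (1 / p) * h x := by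
    filter_upwards [hw, hh] with x hwx hhx using mul_nonneg (rpow_nonneg hwx _) hhx
  have hu_rpow : (fun x => (w x ^ (1 / q)) ^ q) =ᵐ[μ] w := by
    filter_upwards [hw] with x hwx
    rw [← rpow_mul hwx, one_div_mul_cancel hpq.symm.ne_zero, rpow_one]
  have hv_rpow : (fun x => (w x ^ (1 / p) * h x) ^ p) =ᵐ[μ] fun x => w x * h x ^ p := by
    filter_upwards [hw, hh] with x hwx hhx
    rw [mul_rpow (rpow_nonneg hwx _) hhx, ← rpow_mul hwx, one_div_mul_cancel hpq.ne_zero, rpow_one]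
  have huv : (fun x => w x ^ (1 / q) * (w x ^ (1 / p) * h x)) =ᵐ[μ] fun x => w x * h x := by
    filter_upwards [hw] with x hwx
    rw [← mul_assoc, ← rpow_add_of_nonneg hwx hpq.symm.one_div_nonneg hpq.one_div_nonneg,
      ← hq, sub_add_cancel, rpow_one]
  have hw_meas (r : ℝ) : AEStronglyMeasurable (fun x => w x ^ r) μ :=
    (hw_int.aemeasurable.pow_const r).aestronglyMeasurable
  have hu_memLp : MemLp (fun x => w x ^ (1 / q)) (ENNReal.ofReal q) μ := by
    refine memLp_of_integrable_norm_rpow hpq.symm.pos (hw_meas _) (hw_int.congr ?_)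
    filter_upwards [hu, hu_rpow] with x hux hx
    rw [norm_of_nonneg hux, hx]
  have hv_memLp : MemLp (fun x => w x ^ (1 / p) * h x) (ENNReal.ofReal p) μ := by
    refine memLp_of_integrable_norm_rpow hpq.pos ((hw_meas _).mul hh_meas) (hwh_int.congr ?_)
    filter_upwards [hv, hv_rpow] with x hvx hx
    rw [norm_of_nonneg hvx, hx]
  have holder := integral_mul_le_Lp_mul_Lq_of_nonneg hpq.symm hu hv hu_memLp hv_memLp
  rwa [integral_congr_ae huv, integral_congr_ae hu_rpow, integral_congr_ae hv_rpow, ← hq] at holder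

end WeightedHolder

section Convex

variable {a b : ℝ} {φ : ℝ → ℝ}

theorem convexOn_le_secant {x : ℝ} (hab : a < b) (hφ : ConvexOn ℝ (Icc a b) φ)
    (hx : x ∈ Icc a b) : φ x ≤ ((b - x) * φ a + (x - a) * φ b) / (b - a) := by
  rw [le_div_iff₀' (sub_pos.2 hab)]
  obtain rfl | hax := hx.1.eq_or_lt
  · simp
  obtain rfl | hxb := hx.2.eq_or_lt
  · simp
  exact hφ.secant_mono_aux1 (left_mem_Icc.2 hab.le) (right_mem_Icc.2 hab.le) hax hxb

theorem intervalIntegrable_of_convexOn (hab : a ≤ b) (hφ : ConvexOn ℝ (Icc a b) φ) :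
    IntervalIntegrable φ volume a b := by
  have hcont : ContinuousOn φ (Ioo a b) := by
    simpa only [interior_Icc] using hφ.continuousOn_interior
  set M := max (φ a) (φ b)
  have hle {x : ℝ} (hx : x ∈ Icc a b) : φ x ≤ M :=
    hφ.le_max_of_mem_Icc (left_mem_Icc.2 hab) (right_mem_Icc.2 hab) hx
  -- A lower bound, from convexity at the midpoint of `x` and its reflection `a + b - x`.
  have hge {x : ℝ} (hx : x ∈ Icc a b) : 2 * φ ((a + b) / 2) - M ≤ φ x := by
    have hx' : a + b - x ∈ Icc a b := ⟨by linarith [hx.2], by linarith [hx.1]⟩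
    have hmid := hφ.2 hx hx' one_half_pos.le one_half_pos.le (add_halves 1)
    rw [← smul_add, add_sub_cancel, ← smul_add, smul_eq_mul, smul_eq_mul,
      one_div_mul_eq_div] at hmid
    linarith [hle hx']
  rw [intervalIntegrable_iff_integrableOn_Ioo_of_le hab]
  refine .of_bound measure_Ioo_lt_top (hcont.aestronglyMeasurable measurableSet_Ioo)
    (max |2 * φ ((a + b) / 2) - M| |M|) ?_
  filter_upwards [ae_restrict_mem measurableSet_Ioo] with x hx
  have hx := Ioo_subset_Icc_self hx
  exact abs_le_max_abs_abs (hge hx) (hle hx)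

theorem integral_sub_mul_sub_rpow_mul_secant {s : ℝ} (A B : ℝ) (hab : a < b) (hs : 0 ≤ s) :
    ∫ x in a..b, (x - a) * ((b - x) ^ s * (((b - x) * A + (x - a) * B) / (b - a))) =
      (b - a) ^ (s + 2) * (((s + 1) * A + 2 * B) / ((s + 1) * (s + 2) * (s + 3))) := by
  have hL : 0 < b - a := sub_pos.2 hab
  have hint (n : ℕ) (r c : ℝ) (hr : 0 ≤ r) :
      IntervalIntegrable (fun x => c * ((x - a) ^ n * (b - x) ^ r)) volume a b :=
    Continuous.intervalIntegrable (by fun_prop (disch := assumption)) _ _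
  have hs1 : 0 ≤ s + 1 := by linarith
  have beta_one : ∫ x in a..b, (x - a) ^ 1 * (b - x) ^ (s + 1) =
      (b - a) ^ (s + 3) / ((s + 2) * (s + 3)) := by
    rw [integral_sub_pow_mul_sub_rpow _ hab.le (by linarith)]
    simp only [Finset.prod_range_succ, Finset.prod_range_zero, Nat.factorial]
    push_cast
    ring_nf
  have beta_two : ∫ x in a..b, (x - a) ^ 2 * (b - x) ^ s =
      2 * (b - a) ^ (s + 3) / ((s + 1) * (s + 2) * (s + 3)) := by
    rw [integral_sub_pow_mul_sub_rpow _ hab.le (by linarith)]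
    simp only [Finset.prod_range_succ, Finset.prod_range_zero, Nat.factorial]
    push_cast
    ring_nf
  calc ∫ x in a..b, (x - a) * ((b - x) ^ s * (((b - x) * A + (x - a) * B) / (b - a)))
      = ∫ x in a..b, (A / (b - a) * ((x - a) ^ 1 * (b - x) ^ (s + 1)) +
          B / (b - a) * ((x - a) ^ 2 * (b - x) ^ s)) := by
        refine intervalIntegral.integral_congr fun x hx => ?_
        rw [uIcc_of_le hab.le] at hx
        simp only [rpow_add_one' (sub_nonneg.2 hx.2) (by linarith : s + 1 ≠ 0)]
        ring
    _ = A / (b - a) * ((b - a) ^ (s + 3) / ((s + 2) * (s + 3))) +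
          B / (b - a) * (2 * (b - a) ^ (s + 3) / ((s + 1) * (s + 2) * (s + 3))) := by
        rw [intervalIntegral.integral_add (hint _ _ _ hs1) (hint _ _ _ hs),
          intervalIntegral.integral_const_mul, intervalIntegral.integral_const_mul,
          beta_one, beta_two]
    _ = _ := by
        rw [show s + 3 = s + 2 + 1 by ring, rpow_add_one hL.ne']
        field_simp

theorem integral_sub_mul_sub_rpow_mul_le_of_convexOn {s : ℝ} (hab : a < b) (hs : 0 ≤ s)
    (hφ : ConvexOn ℝ (Icc a b) φ) :
    ∫ x in a..b, (x - a) * ((b - x) ^ s * φ x) ≤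
      (b - a) ^ (s + 2) * (((s + 1) * φ a + 2 * φ b) / ((s + 1) * (s + 2) * (s + 3))) := by
  have hcont : Continuous fun x : ℝ => (b - x) ^ s := by fun_prop (disch := assumption)
  have hφ_int := intervalIntegrable_of_convexOn hab.le hφ
  rw [← integral_sub_mul_sub_rpow_mul_secant _ _ hab hs]
  refine intervalIntegral.integral_mono_on hab.le
    ((hφ_int.continuousOn_mul hcont.continuousOn).continuousOn_mul (by fun_prop))
    (Continuous.intervalIntegrable (by fun_prop (disch := assumption)) _ _) fun x hx => ?_
  have hxa := sub_nonneg.2 hx.1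
  have hxb := sub_nonneg.2 hx.2
  gcongr
  exact convexOn_le_secant hab hφ hx

end Convex

theorem hasDerivWithinAt_iteratedDerivWithin {𝕜 F : Type*} [NontriviallyNormedField 𝕜]
    [NormedAddCommGroup F] [NormedSpace 𝕜 F] {n : ℕ} {f : 𝕜 → F} {s : Set 𝕜} {x : 𝕜}
    (h : DifferentiableWithinAt 𝕜 (iteratedDerivWithin n f s) s x) :
    HasDerivWithinAt (iteratedDerivWithin n f s) (iteratedDerivWithin (n + 1) f s x) s x := by
  rw [iteratedDerivWithin_succ]
  exact h.hasDerivWithinAt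

theorem aestronglyMeasurable_of_hasDerivWithinAt_Icc {F : Type*} [NormedAddCommGroup F]
    [NormedSpace ℝ F] [CompleteSpace F] {a b : ℝ} {f f' : ℝ → F}
    (hf : ∀ x ∈ Icc a b, HasDerivWithinAt f (f' x) (Icc a b) x) :
    AEStronglyMeasurable f' (volume.restrict (Ioc a b)) := by
  rw [← restrict_Ioo_eq_restrict_Ioc]
  refine (aestronglyMeasurable_deriv f _).congr ?_
  filter_upwards [ae_restrict_mem measurableSet_Ioo] with x hx
  exact ((hf x (Ioo_subset_Icc_self hx)).hasDerivAt (Icc_mem_nhds hx.1 hx.2)).deriv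

section Trapezoid

variable {a b : ℝ} {f f' f'' : ℝ → ℝ}

theorem integral_sub_mul_sub_mul_deriv_deriv
    (hf : ∀ x ∈ uIcc a b, HasDerivWithinAt f (f' x) (uIcc a b) x)
    (hf' : ∀ x ∈ uIcc a b, HasDerivWithinAt f' (f'' x) (uIcc a b) x)
    (hf'' : IntervalIntegrable f'' volume a b) :
    ∫ x in a..b, (x - a) * (b - x) * f'' x = (b - a) * (f a + f b) - 2 * ∫ x in a..b, f x := by
  have hw (x : ℝ) : HasDerivAt (fun x => (x - a) * (b - x)) (a + b - 2 * x) x := by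
    refine (((hasDerivAt_id x).sub_const a).mul ((hasDerivAt_id x).const_sub b)).congr_deriv ?_
    simp only [id]
    ring
  have hw' (x : ℝ) : HasDerivAt (fun x => a + b - 2 * x) (-2) x := by
    simpa using ((hasDerivAt_id x).const_mul 2).const_sub (a + b)
  have hf'_int : IntervalIntegrable f' volume a b :=
    ContinuousOn.intervalIntegrable fun x hx => (hf' x hx).continuousWithinAt
  rw [intervalIntegral.integral_mul_deriv_eq_deriv_mul_of_hasDerivWithinAt
      (fun x _ => (hw x).hasDerivWithinAt) hf'
      (Continuous.intervalIntegrable (by fun_prop) _ _) hf'',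
    intervalIntegral.integral_mul_deriv_eq_deriv_mul_of_hasDerivWithinAt
      (fun x _ => (hw' x).hasDerivWithinAt) hf intervalIntegrable_const hf'_int,
    intervalIntegral.integral_const_mul]
  ring

theorem abs_trapezoid_sub_average_le (hab : a < b)
    (hf : ∀ x ∈ Icc a b, HasDerivWithinAt f (f' x) (Icc a b) x)
    (hf' : ∀ x ∈ Icc a b, HasDerivWithinAt f' (f'' x) (Icc a b) x)
    (hf'' : IntervalIntegrable f'' volume a b) :
    |(f a + f b) / 2 - (1 / (b - a)) * ∫ x in a..b, f x| ≤
      1 / (2 * (b - a)) * ∫ x in a..b, (x - a) * ((b - x) * |f'' x|) := by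
  have hL : 0 < b - a := sub_pos.2 hab
  have hident : (f a + f b) / 2 - (1 / (b - a)) * ∫ x in a..b, f x =
      1 / (2 * (b - a)) * ∫ x in a..b, (x - a) * (b - x) * f'' x := by
    rw [← uIcc_of_le hab.le] at hf hf'
    rw [integral_sub_mul_sub_mul_deriv_deriv hf hf' hf'']
    field_simp
  rw [hident, abs_mul, abs_of_pos (by positivity : 0 < 1 / (2 * (b - a)))]
  gcongr
  refine (intervalIntegral.abs_integral_le_integral_abs hab.le).trans_eq ?_
  refine intervalIntegral.integral_congr fun x hx => ?_
  rw [uIcc_of_le hab.le] at hx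
  simp only [abs_mul, abs_of_nonneg (sub_nonneg.2 hx.1), abs_of_nonneg (sub_nonneg.2 hx.2),
    mul_assoc]

end Trapezoid

theorem integral_sub_mul_sub_mul_abs_le {a b p : ℝ} {g : ℝ → ℝ} (hab : a < b) (hp : 1 ≤ p)
    (hg : AEStronglyMeasurable g (volume.restrict (Ioc a b)))
    (hconv : ConvexOn ℝ (Icc a b) fun x => |g x| ^ p) :
    ∫ x in a..b, (x - a) * ((b - x) * |g x|) ≤
      ((b - a) ^ 2 / 2) ^ (1 - 1 / p) * ((b - a) ^ (p + 2) *
        (((p + 1) * |g a| ^ p + 2 * |g b| ^ p) / ((p + 1) * (p + 2) * (p + 3)))) ^ (1 / p) := by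
  have hp0 : 0 ≤ p := by linarith
  have hmem : ∀ᵐ x ∂volume.restrict (Ioc a b), x ∈ Icc a b :=
    (ae_restrict_mem measurableSet_Ioc).mono fun _ hx => Ioc_subset_Icc_self hx
  have hw_integral : ∫ x in a..b, (x - a) = (b - a) ^ 2 / 2 := by
    rw [intervalIntegral.integral_comp_sub_right (fun x => x) a, integral_id]
    ring
  have hrpow : EqOn (fun x => (x - a) * ((b - x) ^ p * |g x| ^ p))
      (fun x => (x - a) * ((b - x) * |g x|) ^ p) (uIcc a b) := fun x hx => by
    rw [uIcc_of_le hab.le] at hx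
    simp only [mul_rpow (sub_nonneg.2 hx.2) (abs_nonneg _)]
  have hint : IntervalIntegrable (fun x => (x - a) * ((b - x) ^ p * |g x| ^ p)) volume a b :=
    ((intervalIntegrable_of_convexOn hab.le hconv).continuousOn_mul
      (by fun_prop (disch := assumption))).continuousOn_mul (by fun_prop)
  have holder : ∫ x in a..b, (x - a) * ((b - x) * |g x|) ≤
      (∫ x in a..b, (x - a)) ^ (1 - 1 / p) *
        (∫ x in a..b, (x - a) * ((b - x) * |g x|) ^ p) ^ (1 / p) := by
    simp only [intervalIntegral.integral_of_le hab.le]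
    exact integral_mul_le_weight_mul_Lp_of_nonneg hp
      (hmem.mono fun x hx => sub_nonneg.2 hx.1)
      (hmem.mono fun x hx => mul_nonneg (sub_nonneg.2 hx.2) (abs_nonneg _))
      (Continuous.integrableOn_Ioc (by fun_prop))
      ((by fun_prop : Continuous fun x => b - x).aestronglyMeasurable.mul hg.norm)
      (hint.congr_uIoo (hrpow.mono uIoo_subset_uIcc_self)).1
  refine holder.trans ?_
  rw [hw_integral, ← intervalIntegral.integral_congr hrpow]
  gcongr
  · refine intervalIntegral.integral_nonneg hab.le fun x hx => ?_
    have hxa := sub_nonneg.2 hx.1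
    have hxb := sub_nonneg.2 hx.2
    positivity
  · exact integral_sub_mul_sub_rpow_mul_le_of_convexOn hab hp0 hconv

theorem intervalIntegrable_of_convexOn_abs_rpow {a b p : ℝ} {g : ℝ → ℝ} (hab : a ≤ b) (hp : 1 ≤ p)
    (hg : AEStronglyMeasurable g (volume.restrict (Ioc a b)))
    (hconv : ConvexOn ℝ (Icc a b) fun x => |g x| ^ p) : IntervalIntegrable g volume a b := by
  rw [intervalIntegrable_iff_integrableOn_Ioc_of_le hab]
  exact (memLp_of_integrable_norm_rpow (by linarith) hg
    (intervalIntegrable_of_convexOn hab hconv).1).integrable (ENNReal.one_le_ofReal.2 hp)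

theorem cor33_convex_general {a b p : ℝ} {f f' f'' : ℝ → ℝ} (hab : a < b) (hp : 1 ≤ p)
    (hf : ∀ x ∈ Icc a b, HasDerivWithinAt f (f' x) (Icc a b) x)
    (hf' : ∀ x ∈ Icc a b, HasDerivWithinAt f' (f'' x) (Icc a b) x)
    (hconv : ConvexOn ℝ (Icc a b) fun x => |f'' x| ^ p) :
    |(f a + f b) / 2 - (1 / (b - a)) * ∫ x in a..b, f x| ≤
      ((b - a) ^ 2 / 2 ^ (2 - 1 / p)) *
        (((p + 1) * |f'' a| ^ p + 2 * |f'' b| ^ p) / ((p + 1) * (p + 2) * (p + 3))) ^ (1 / p) := by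
  have hL : 0 < b - a := sub_pos.2 hab
  have hp0 : 0 < p := by linarith
  have hf''_meas := aestronglyMeasurable_of_hasDerivWithinAt_Icc hf'
  have hf''_int := intervalIntegrable_of_convexOn_abs_rpow hab.le hp hf''_meas hconv
  set K := ((p + 1) * |f'' a| ^ p + 2 * |f'' b| ^ p) / ((p + 1) * (p + 2) * (p + 3))
  have hK : 0 ≤ K := by positivity
  calc |(f a + f b) / 2 - (1 / (b - a)) * ∫ x in a..b, f x|
      ≤ 1 / (2 * (b - a)) * ∫ x in a..b, (x - a) * ((b - x) * |f'' x|) :=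
        abs_trapezoid_sub_average_le hab hf hf' hf''_int
    _ ≤ 1 / (2 * (b - a)) *
          (((b - a) ^ 2 / 2) ^ (1 - 1 / p) * ((b - a) ^ (p + 2) * K) ^ (1 / p)) := by
        gcongr
        exact integral_sub_mul_sub_mul_abs_le hab hp hf''_meas hconv
    _ = (b - a) ^ 2 / 2 ^ (2 - 1 / p) * K ^ (1 / p) := by
        have hK_root : ((b - a) ^ (p + 2) * K) ^ (1 / p) =
            (b - a) * ((b - a) ^ 2) ^ (1 / p) * K ^ (1 / p) := by
          rw [mul_rpow (by positivity) hK, rpow_add hL, rpow_two,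
            mul_rpow (by positivity) (by positivity), ← rpow_mul hL.le,
            mul_one_div_cancel hp0.ne', rpow_one]
        rw [hK_root, rpow_sub (by positivity), rpow_sub two_pos, rpow_one, rpow_two,
          div_rpow (by positivity) two_pos.le]
        field_simp

/-- Corollary of Theorem 3.3 with m = α = 1 and n = 2. -/
theorem cor33_convex (a b p : ℝ) (f : ℝ → ℝ)
    (ha : 0 < a) (hab : a < b) (hp : 1 ≤ p)
    (hdiff : ∀ k < 2, DifferentiableOn ℝ (iteratedDerivWithin k f (Set.Icc 0 b)) (Set.Icc 0 b))
    (hint : IntegrableOn (fun x => |iteratedDerivWithin 2 f (Set.Icc 0 b) x|) (Set.Icc 0 b))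
    (hconv : ConvexOn ℝ (Set.Icc (0:ℝ) b)
      (fun x => |iteratedDerivWithin 2 f (Set.Icc 0 b) x| ^ p)) :
    |(f a + f b) / 2 - (1 / (b - a)) * ∫ x in a..b, f x|
    ≤ ((b - a) ^ 2 / (2:ℝ) ^ (2 - 1 / p))
        * ( ((p + 1) * |iteratedDerivWithin 2 f (Set.Icc 0 b) a| ^ p
              + 2 * |iteratedDerivWithin 2 f (Set.Icc 0 b) b| ^ p)
            / ((p + 1) * (p + 2) * (p + 3)) ) ^ (1 / p) := by
  have hsub : Icc a b ⊆ Icc 0 b := Icc_subset_Icc_left ha.le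
  have hderiv (k : ℕ) (hk : k < 2) (x : ℝ) (hx : x ∈ Icc a b) :
      HasDerivWithinAt (iteratedDerivWithin k f (Icc 0 b))
        (iteratedDerivWithin (k + 1) f (Icc 0 b) x) (Icc a b) x :=
    (hasDerivWithinAt_iteratedDerivWithin (hdiff k hk x (hsub hx))).mono hsub
  exact cor33_convex_general hab hp (hderiv 0 two_pos) (hderiv 1 one_lt_two)
    (hconv.subset hsub (convex_Icc a b))
end

section
/- Let b > a > 0 and p ≥ 1. Then |1/H(a,b) − 1/L(a,b)| ≤ (2(b−a)² / (2^{1−1/p}·[(p+2)(p+3)]^{1/p}))·[ 1/a^{3p} + 2/((p+1)·b^{3p}) ]^{1/p}. (This follows from applying the general second-order Hermite–Hadamard-type bound with convexity exponent p to the function f(x) = 1/x, whose second derivative is 2/x³.) -/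
open Real

/-!
`1/L(a,b)` is the average of `x⁻¹` over `[a, b]` and `1/H(a,b)` is its trapezoidal approximation, so
the classical error bound, with second derivative `2x⁻³ ≤ 2a⁻³`, makes the left-hand side at most
`(b - a)² / (6a³)`. The right-hand side without its term in `b` is
`(b - a)² a⁻³ (2 / ((p + 2)(p + 3)))^(1/p)`, and the root is at least `1/6` because Bernoulli's
inequality gives `p + 2 ≤ 3 ^ p` and `p + 3 ≤ 2 * 2 ^ p`.
-/

section TrapezoidalRule

open Set

variable {a b : ℝ}

lemma abs_iteratedDerivWithin_two_inv_le (ha : 0 < a) (hab : a < b) (x : ℝ) :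
    |iteratedDerivWithin 2 (fun y : ℝ ↦ y⁻¹) (Icc a b) x| ≤ 2 / a ^ 3 := by
  by_cases hx : x ∈ Icc a b
  · have hx₀ : 0 < x := ha.trans_le hx.1
    have deriv_two : iteratedDeriv 2 (fun y : ℝ ↦ y⁻¹) x = 2 / x ^ 3 := by
      rw [iteratedDeriv_eq_iterate, show deriv^[2] (fun y : ℝ ↦ y⁻¹) x = _ from iter_deriv_inv 2 x,
        show (-1 - (2 : ℕ) : ℤ) = -(3 : ℕ) by norm_num, zpow_neg, zpow_natCast]
      norm_num [div_eq_mul_inv]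
    rw [iteratedDerivWithin_eq_iteratedDeriv (uniqueDiffOn_Icc hab)
      (contDiffAt_inv ℝ hx₀.ne') hx, deriv_two, abs_of_pos (by positivity)]
    gcongr
    exact hx.1
  -- `trapezoidal_error_le_of_c2` also asks for the bound off `[a, b]`, where the value is junk.
  · have deriv_zero : iteratedDerivWithin 2 (fun y : ℝ ↦ y⁻¹) (Icc a b) x = 0 := by
      rw [iteratedDerivWithin_succ]
      exact derivWithin_zero_of_notMem_closure (by rwa [closure_Icc])
    rw [deriv_zero, abs_zero]
    positivity

lemma abs_trapezoidal_error_inv_le (ha : 0 < a) (hab : a < b) :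
    |trapezoidal_error (fun x : ℝ ↦ x⁻¹) 1 a b| ≤ (b - a) ^ 3 / (6 * a ^ 3) := by
  have smooth : ContDiffOn ℝ 2 (fun x : ℝ ↦ x⁻¹) (uIcc a b) := by
    rw [uIcc_of_le hab.le]
    exact contDiffOn_id.inv fun x hx ↦ (ha.trans_le hx.1).ne'
  have bound : ∀ x, |iteratedDerivWithin 2 (fun y : ℝ ↦ y⁻¹) (uIcc a b) x| ≤ 2 / a ^ 3 := by
    rw [uIcc_of_le hab.le]
    exact abs_iteratedDerivWithin_two_inv_le ha hab
  calc |trapezoidal_error (fun x : ℝ ↦ x⁻¹) 1 a b|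
      ≤ |b - a| ^ 3 * (2 / a ^ 3) / (12 * (1 : ℕ) ^ 2) :=
        trapezoidal_error_le_of_c2 smooth bound one_pos
    _ = (b - a) ^ 3 / (6 * a ^ 3) := by
        rw [abs_of_pos (sub_pos.2 hab), Nat.cast_one]
        ring

lemma trapezoidal_error_inv (ha : 0 < a) (hb : 0 < b) :
    trapezoidal_error (fun x : ℝ ↦ x⁻¹) 1 a b =
      (b - a) * ((1 / a + 1 / b) / 2) - (log b - log a) := by
  rw [trapezoidal_error, trapezoidal_integral_one, integral_inv_of_pos ha hb,
    log_div hb.ne' ha.ne']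
  ring

lemma abs_inv_harmonicMean_sub_inv_logMean_le (ha : 0 < a) (hab : a < b) :
    |(1 / a + 1 / b) / 2 - (log b - log a) / (b - a)| ≤ (b - a) ^ 2 * (1 / 6 * (1 / a ^ 3)) := by
  have hd : 0 < b - a := sub_pos.2 hab
  have mean_error : (1 / a + 1 / b) / 2 - (log b - log a) / (b - a) =
      trapezoidal_error (fun x : ℝ ↦ x⁻¹) 1 a b / (b - a) := by
    rw [trapezoidal_error_inv ha (ha.trans hab), sub_div _ (log b - log a),
      mul_div_cancel_left₀ _ hd.ne']
  rw [mean_error, abs_div, abs_of_pos hd, div_le_iff₀ hd]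
  calc |trapezoidal_error (fun x : ℝ ↦ x⁻¹) 1 a b| ≤ (b - a) ^ 3 / (6 * a ^ 3) :=
        abs_trapezoidal_error_inv_le ha hab
    _ = (b - a) ^ 2 * (1 / 6 * (1 / a ^ 3)) * (b - a) := by ring

end TrapezoidalRule

section PowerEstimates

variable {p : ℝ}

lemma add_two_mul_add_three_le_two_mul_rpow (hp : 1 ≤ p) :
    (p + 2) * (p + 3) ≤ 2 * (6 : ℝ) ^ p := by
  have bernoulli_three : 1 + p * 2 ≤ (3 : ℝ) ^ p := by
    convert one_add_mul_self_le_rpow_one_add (s := 2) (by norm_num) hp using 2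
    norm_num
  have bernoulli_two : 1 + p * 1 ≤ (2 : ℝ) ^ p := by
    convert one_add_mul_self_le_rpow_one_add (s := 1) (by norm_num) hp using 2
    norm_num
  calc (p + 2) * (p + 3) ≤ 3 ^ p * (2 * 2 ^ p) := by
        gcongr <;> linarith
    _ = 2 * (3 * 2) ^ p := by
        rw [mul_rpow (by norm_num) (by norm_num)]
        ring
    _ = 2 * 6 ^ p := by norm_num

lemma one_div_six_le_rpow_one_div (hp : 1 ≤ p) :
    1 / 6 ≤ (2 / ((p + 2) * (p + 3))) ^ (1 / p) := by
  rw [one_div p, le_rpow_inv_iff_of_pos (by norm_num) (by positivity) (by positivity),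
    div_rpow zero_le_one (by norm_num), one_rpow, div_le_div_iff₀ (by positivity) (by positivity),
    one_mul]
  exact add_two_mul_add_three_le_two_mul_rpow hp

lemma le_rpow_add_rpow_one_div {x y : ℝ} (hx : 0 ≤ x) (hy : 0 ≤ y) (hp : 0 < p) :
    x ≤ (x ^ p + y) ^ (1 / p) := by
  rw [one_div, le_rpow_inv_iff_of_pos hx (by positivity) hp]
  exact le_add_of_nonneg_right hy

lemma div_rpow_one_sub_mul_rpow {c d : ℝ} (hc : 0 < c) (hd : 0 ≤ d) (r : ℝ) :
    c / (c ^ (1 - r) * d ^ r) = (c / d) ^ r := by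
  rw [rpow_sub hc, rpow_one, div_rpow hc.le hd]
  field_simp

end PowerEstimates

/-- mean inequality (Theorem 4.5, corrected constant), where
`1/H(a,b) = (1/a + 1/b)/2` and `1/L(a,b) = (log b - log a)/(b - a)`. -/
theorem mean_ineq_five (a b p : ℝ)
    (ha : 0 < a) (hab : a < b) (hp : 1 ≤ p) :
    |(1 / a + 1 / b) / 2 - (Real.log b - Real.log a) / (b - a)|
    ≤ (2 * (b - a) ^ 2 / ((2:ℝ) ^ (1 - 1 / p) * ((p + 2) * (p + 3)) ^ (1 / p)))
        * (1 / a ^ (3 * p) + 2 / ((p + 1) * b ^ (3 * p))) ^ (1 / p) := by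
  have hb : 0 < b := ha.trans hab
  set S := 1 / a ^ (3 * p) + 2 / ((p + 1) * b ^ (3 * p)) with hS
  have cube_le : 1 / a ^ 3 ≤ S ^ (1 / p) := by
    have pow_cube : 1 / a ^ (3 * p) = (1 / a ^ 3) ^ p := by
      rw [rpow_mul ha.le, div_rpow zero_le_one (by positivity), one_rpow, rpow_ofNat]
    rw [hS, pow_cube]
    exact le_rpow_add_rpow_one_div (by positivity) (by positivity) (by positivity)
  calc |(1 / a + 1 / b) / 2 - (log b - log a) / (b - a)|
      ≤ (b - a) ^ 2 * (1 / 6 * (1 / a ^ 3)) := abs_inv_harmonicMean_sub_inv_logMean_le ha hab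
    _ ≤ (b - a) ^ 2 * ((2 / ((p + 2) * (p + 3))) ^ (1 / p) * S ^ (1 / p)) := by
        gcongr
        exact one_div_six_le_rpow_one_div hp
    _ = 2 * (b - a) ^ 2 / (2 ^ (1 - 1 / p) * ((p + 2) * (p + 3)) ^ (1 / p)) * S ^ (1 / p) := by
        rw [← div_rpow_one_sub_mul_rpow two_pos (by positivity)]
        ring
end
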